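/- Suppose P = ([n],⪯) is a chain 1 ⪯ 2 ⪯ ⋯ ⪯ n (the NRT block space). Then: (i) for 1 ≤ r ≤ M_w, the number of v ∈ 𝔽_q^N with w_{(P,w,π)}(v) = r equals |D_r^{k_1}|; (ii) for r = t·M_w + k with 0 < k ≤ M_w and 1 ≤ t ≤ n−1, the number of v ∈ 𝔽_q^N with w_{(P,w,π)}(v) = r equals q^{k_1+k_2+⋯+k_t}·|D_k^{k_{t+1}}|. -/

import Mathlib

open scoped Classical

noncomputable section

variable {F : Type*} [Field F] [Fintype F]
variable {ι : Type*} [Fintype ι] [PartialOrder ι]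

/-- The block weight induced by `w`: the maximum of the weights of the coordinates. -/
def blockWt (w : F → ℕ) {m : ℕ} (v : Fin m → F) : ℕ :=
  Finset.univ.sup fun t => w (v t)

/-- `M_w`, the maximum weight of an element of `F`. -/
def maxWt (w : F → ℕ) : ℕ := Finset.univ.sup w

/-- `D_r = {α ∈ F : w(α) = r}`. -/
def Dset (w : F → ℕ) (r : ℕ) : Finset F := Finset.univ.filter fun a => w a = r

/-- `D_r^k = {v ∈ F^k : w̃^k(v) = r}`. -/
def Dk (w : F → ℕ) (m r : ℕ) : Finset (Fin m → F) :=
  Finset.univ.filter fun v => blockWt w v = r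

/-- The order ideal (down-set) of the poset generated by a finite set `A`. -/
def genIdeal (A : Finset ι) : Finset ι := Finset.univ.filter fun i => ∃ j ∈ A, i ≤ j

/-- The set of maximal elements of a finite set `I`. -/
def maxElems (I : Finset ι) : Finset ι := I.filter fun i => ∀ j ∈ I, i ≤ j → j = i

/-- `I` is an order ideal (down-set) of the poset. -/
def IsIdeal (I : Finset ι) : Prop := ∀ a b : ι, a ≤ b → b ∈ I → a ∈ I

/-- The collection `𝓘_j^i` of ideals of cardinality `i` with exactly `j` maximal elements. -/
def idealsWithMax (ι : Type*) [Fintype ι] [PartialOrder ι] (j i : ℕ) : Finset (Finset ι) :=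
  Finset.univ.filter fun I => IsIdeal I ∧ I.card = i ∧ (maxElems I).card = j

/-- The π-support of a block vector. -/
def suppPi (k : ι → ℕ) (x : ∀ i, Fin (k i) → F) : Finset ι :=
  Finset.univ.filter fun i => x i ≠ 0

/-- The `(P,w,π)`-weight. -/
def wtP (w : F → ℕ) (k : ι → ℕ) (x : ∀ i, Fin (k i) → F) : ℕ :=
  ∑ i ∈ maxElems (genIdeal (suppPi k x)), blockWt w (x i)
    + maxWt w * ((genIdeal (suppPi k x)) \ maxElems (genIdeal (suppPi k x))).card

/-- The `(P,w,π)`-distance. -/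
def dP (w : F → ℕ) (k : ι → ℕ) (x y : ∀ i, Fin (k i) → F) : ℕ := wtP w k (x - y)

lemma blockWt_le_max (w : F → ℕ) {m : ℕ} (v : Fin m → F) : blockWt w v ≤ maxWt w :=
  Finset.sup_le fun t _ => Finset.le_sup (f := w) (Finset.mem_univ (v t))

lemma blockWt_eq_zero_iff (w : F → ℕ) (hw0 : ∀ a : F, w a = 0 ↔ a = 0) {m : ℕ}
    (v : Fin m → F) : blockWt w v = 0 ↔ v = 0 := by
  unfold blockWt
  rw [← Nat.bot_eq_zero, Finset.sup_eq_bot_iff]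
  simp only [Nat.bot_eq_zero, hw0, Finset.mem_univ, true_imp_iff]
  constructor
  · intro h
    funext i
    exact h i
  · rintro rfl i
    rfl

lemma wtP_of_top (n : ℕ) (w : F → ℕ) (k : Fin n → ℕ) (x : ∀ i, Fin (k i) → F) (m : Fin n)
    (hm : x m ≠ 0) (hx : ∀ j, m < j → x j = 0) :
    wtP w k x = blockWt w (x m) + maxWt w * (m : ℕ) := by
  have h1 : genIdeal (suppPi k x) = Finset.Iic m := by
    ext i
    simp only [genIdeal, suppPi, Finset.mem_filter, Finset.mem_univ, true_and, Finset.mem_Iic]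
    constructor
    · rintro ⟨j, hj, hij⟩
      by_contra h
      exact hj (hx j (lt_of_lt_of_le (not_le.mp h) hij))
    · intro h
      exact ⟨m, hm, h⟩
  have h2 : maxElems (Finset.Iic m) = {m} := by
    ext i
    simp only [maxElems, Finset.mem_filter, Finset.mem_Iic, Finset.mem_singleton]
    constructor
    · rintro ⟨h, h'⟩
      exact (h' m le_rfl h).symm
    · rintro rfl
      exact ⟨le_rfl, fun j h h' => le_antisymm h h'⟩
  have h3 : (Finset.Iic m \ {m}).card = (m : ℕ) := by
    rw [Finset.card_sdiff_of_subset (by simp)]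
    simp
  unfold wtP
  rw [h1, h2, Finset.sum_singleton]
  congr 2
  convert h3

lemma wtP_zero (n : ℕ) (w : F → ℕ) (k : Fin n → ℕ) :
    wtP w k (0 : ∀ i, Fin (k i) → F) = 0 := by
  simp [wtP, genIdeal, suppPi, maxElems]

lemma exists_top (n : ℕ) (k : Fin n → ℕ) (x : ∀ i, Fin (k i) → F) (hx : x ≠ 0) :
    ∃ m, x m ≠ 0 ∧ ∀ j, m < j → x j = 0 := by
  have hne : (Finset.univ.filter fun i => x i ≠ 0).Nonempty := by
    obtain ⟨i, hi⟩ := Function.ne_iff.mp hx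
    exact ⟨i, by simpa using hi⟩
  refine ⟨Finset.max' _ hne, (Finset.mem_filter.mp (Finset.max'_mem _ hne)).2, fun j hj => ?_⟩
  by_contra h
  exact absurd (Finset.le_max' _ j (by simpa using h)) (not_le.mpr hj)

lemma wtP_eq_iff (n : ℕ) (w : F → ℕ) (hw0 : ∀ a : F, w a = 0 ↔ a = 0) (k : Fin n → ℕ)
    (x : ∀ i, Fin (k i) → F) (t : Fin n) (r : ℕ) (hr : 0 < r) (hrM : r ≤ maxWt w) :
    wtP w k x = (t : ℕ) * maxWt w + r ↔
      blockWt w (x t) = r ∧ ∀ j, t < j → x j = 0 := by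
  constructor
  · intro h
    have hx : x ≠ 0 := by
      rintro rfl
      rw [wtP_zero] at h
      omega
    obtain ⟨m, hm, hm'⟩ := exists_top n k x hx
    rw [wtP_of_top n w k x m hm hm'] at h
    have hb := blockWt_le_max w (x m)
    have hb0 : 0 < blockWt w (x m) :=
      Nat.pos_of_ne_zero fun h0 => hm ((blockWt_eq_zero_iff w hw0 _).mp h0)
    have hmt : m = t := by
      apply Fin.ext
      rcases lt_trichotomy (m : ℕ) (t : ℕ) with h1 | h1 | h1
      · nlinarith
      · exact h1
      · nlinarith
    subst hmt
    refine ⟨?_, hm'⟩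
    rw [mul_comm] at h
    omega
  · rintro ⟨h1, h2⟩
    have ht : x t ≠ 0 := fun h0 => by
      rw [(blockWt_eq_zero_iff w hw0 _).mpr h0] at h1
      omega
    rw [wtP_of_top n w k x t ht h2, h1, mul_comm, add_comm]

lemma card_wtP (n : ℕ) (w : F → ℕ) (hw0 : ∀ a : F, w a = 0 ↔ a = 0) (k : Fin n → ℕ)
    (t : Fin n) (r : ℕ) (hr : 0 < r) (hrM : r ≤ maxWt w) :
    (Finset.univ.filter fun v : ∀ i, Fin (k i) → F =>
      wtP w k v = (t : ℕ) * maxWt w + r).card =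
    Fintype.card F ^ (∑ i ∈ Finset.univ.filter (fun i : Fin n => (i : ℕ) < (t : ℕ)), k i) *
      (Dk w (k t) r).card := by
  have hS : (Finset.univ.filter fun v : ∀ i, Fin (k i) → F =>
      wtP w k v = (t : ℕ) * maxWt w + r) =
      Fintype.piFinset fun i => Finset.univ.filter fun v : Fin (k i) → F =>
        (i = t → blockWt w v = r) ∧ (t < i → v = 0) := by
    ext x
    simp only [Finset.mem_filter, Finset.mem_univ, true_and, Fintype.mem_piFinset]
    rw [wtP_eq_iff n w hw0 k x t r hr hrM]
    constructor
    · rintro ⟨h1, h2⟩ i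
      exact ⟨fun h => by subst h; exact h1, h2 i⟩
    · intro h
      exact ⟨(h t).1 rfl, fun j => (h j).2⟩
  rw [hS, Fintype.card_piFinset, ← Finset.prod_pow_eq_pow_sum]
  rw [← Finset.prod_subset
    (Finset.subset_univ (insert t (Finset.univ.filter (fun i : Fin n => (i : ℕ) < (t : ℕ)))))]
  · rw [Finset.prod_insert (by simp), mul_comm]
    congr 1
    · apply Finset.prod_congr rfl
      intro i hi
      have hi' : i < t := by simpa using hi
      simp [hi'.ne, hi'.not_gt]
    · simp [Dk]
  · intro i _ hi
    simp only [Finset.mem_insert, Finset.mem_filter, Finset.mem_univ, true_and, not_or,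
      not_lt] at hi
    have hti : t < i := lt_of_le_of_ne hi.2 (Ne.symm hi.1)
    rw [Finset.card_eq_one]
    refine ⟨0, ?_⟩
    ext v
    simp [hi.1, hti]

/-- the weight distribution of the NRT block space, i.e. the `(P,w,π)`-space where
`P` is the chain `1 ⪯ 2 ⪯ ⋯ ⪯ n` (modelled as `Fin n` with its natural order). -/
theorem stmt9 (n : ℕ) (hn : 1 ≤ n) (w : F → ℕ) (hw0 : ∀ a : F, w a = 0 ↔ a = 0)
    (hwneg : ∀ a : F, w (-a) = w a) (hwadd : ∀ a b : F, w (a + b) ≤ w a + w b)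
    (k : Fin n → ℕ) :
    (∀ r : ℕ, 1 ≤ r → r ≤ maxWt w →
      (Finset.univ.filter fun v : ∀ i, Fin (k i) → F => wtP w k v = r).card =
        (Dk w (k ⟨0, hn⟩) r).card) ∧
    (∀ t k₀ : ℕ, ∀ _ : 1 ≤ t, ∀ _ : t ≤ n - 1, 0 < k₀ → k₀ ≤ maxWt w →
      (Finset.univ.filter fun v : ∀ i, Fin (k i) → F =>
          wtP w k v = t * maxWt w + k₀).card =
        Fintype.card F ^ (∑ i ∈ Finset.univ.filter (fun i : Fin n => (i : ℕ) < t), k i) *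
          (Dk w (k ⟨t, by omega⟩) k₀).card) := by
  constructor
  · intro r h1 h2
    have h := card_wtP n w hw0 k ⟨0, hn⟩ r h1 h2
    simpa using h
  · intro t k₀ _ _ h1 h2
    exact card_wtP n w hw0 k ⟨t, by omega⟩ k₀ h1 h2
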